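/- arXiv:2505.14475 — 2 statements merged into one kernel-verified Lean document; each statement's English description precedes it below -/
import Mathlib

section
/- Let p ≥ 1 and let V : ℤ → ℝ be p-periodic. Let x ∈ ℝ lie in the interior (as a subset of ℝ) of Σ, and suppose r > 0 with (x − r, x + r) contained in the interior of Σ. Suppose Θ̃ : ℂ → ℂ is complex-analytic on ℂ₊ ∪ {z : |z − x| < r}, maps ℂ₊ into ℂ₊, satisfies Re Θ̃(z) ∈ [−π, 0] and 2 cos(p Θ̃(z)) = Δ(z) for all z ∈ ℂ₊, and takes real values on (x − r, x + r). Then Θ̃'(x) and Θ̃'''(x) are strictly positive real numbers. -/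
/-!
The positivity holds for every Pick function `f` that is real on the real axis near `x` and is not
affine. Letting one of the two points in the Schwarz–Pick inequality tend to `x` gives Julia's
inequality `Im z |f z - f x|² ≤ f' x Im (f z) |z - x|²`, so `f' x > 0`. It also says exactly that
`h z = 1 / (f' x (z - x)) - 1 / (f z - f x)` is a Pick function. This `h` is regular and real near
`x`, and `6 f' x h' x` is the Schwarzian derivative of `f` at `x`. From `h' x ≥ 0` one gets
`2 f' x f''' x ≥ 3 (f'' x)² ≥ 0`. If `f''' x = 0`, then `f'' x = 0`, so `h x = h' x = 0`; Julia's
inequality for `h` then forces `h = 0`, which makes `f` affine.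
-/

open scoped ENNReal

/-- The one-step transfer matrix `[[z - V(n), -1], [1, 0]]`. -/
noncomputable def transferMatrix (V : ℤ → ℝ) (n : ℤ) (z : ℂ) : Matrix (Fin 2) (Fin 2) ℂ :=
  !![z - (V n : ℂ), -1; 1, 0]

/-- The monodromy matrix `Φ(z) = T(p) ⋯ T(1)` of a `p`-periodic potential. -/
noncomputable def monodromyMatrix (p : ℕ) (V : ℤ → ℝ) (z : ℂ) : Matrix (Fin 2) (Fin 2) ℂ :=
  ((List.range p).map fun i => transferMatrix V ((p : ℤ) - i) z).prod

/-- The Floquet discriminant `Δ(z) = tr Φ(z)`. -/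
noncomputable def floquetDiscriminant (p : ℕ) (V : ℤ → ℝ) (z : ℂ) : ℂ :=
  Matrix.trace (monodromyMatrix p V z)

open Complex Filter Metric Topology ComplexConjugate

/-! ### Difference quotients -/

section DifferenceQuotients

variable {𝕜 : Type*} [NontriviallyNormedField 𝕜] {f : 𝕜 → 𝕜} {x z : 𝕜}

theorem analyticAt_dslope_same (hf : AnalyticAt 𝕜 f x) : AnalyticAt 𝕜 (dslope f x) x := by
  obtain ⟨p, hp⟩ := hf
  exact hp.has_fpower_series_dslope_fslope.analyticAt

theorem iteratedDeriv_succ_eq_mul_iteratedDeriv_dslope [CompleteSpace 𝕜] [CharZero 𝕜]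
    (hf : AnalyticAt 𝕜 f x) (n : ℕ) :
    iteratedDeriv (n + 1) f x = (n + 1) * iteratedDeriv n (dslope f x) x := by
  have hcoeff := congrArg (fun p => p.coeff n)
    (hf.hasFPowerSeriesAt.has_fpower_series_dslope_fslope.eq_formalMultilinearSeries
      (analyticAt_dslope_same hf).hasFPowerSeriesAt)
  simp only [FormalMultilinearSeries.coeff_fslope, FormalMultilinearSeries.coeff_ofScalars,
    Nat.factorial_succ, Nat.cast_mul, Nat.cast_succ] at hcoeff
  have hfactorial : (n.factorial : 𝕜) ≠ 0 := by exact_mod_cast n.factorial_ne_zero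
  have hsucc : (n + 1 : 𝕜) ≠ 0 := by exact_mod_cast n.succ_ne_zero
  field_simp at hcoeff
  exact hcoeff

/-- The function `1 / (f' x (z - x)) - 1 / (f z - f x)` of `z`, whose imaginary part is nonnegative
exactly where Julia's inequality for `f` at `x` holds. Writing it with iterated difference quotients
removes the singularity at `z = x`. -/
noncomputable def juliaTransform (f : 𝕜 → 𝕜) (x z : 𝕜) : 𝕜 :=
  dslope (dslope f x) x z / (deriv f x * dslope f x z)

theorem juliaTransform_of_ne (hd : deriv f x ≠ 0) (hz : f z ≠ f x) :
    juliaTransform f x z = 1 / (deriv f x * (z - x)) - 1 / (f z - f x) := by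
  have hzx : z ≠ x := ne_of_apply_ne f hz
  have hzx' : z - x ≠ 0 := sub_ne_zero.2 hzx
  have hz' : f z - f x ≠ 0 := sub_ne_zero.2 hz
  simp only [juliaTransform, dslope_of_ne _ hzx, slope_def_field, dslope_same]
  field_simp

theorem eq_add_deriv_mul_of_juliaTransform_eq_zero (hd : deriv f x ≠ 0) (hz : f z ≠ f x)
    (h : juliaTransform f x z = 0) : f z = f x + deriv f x * (z - x) := by
  rw [juliaTransform_of_ne hd hz, sub_eq_zero, one_div, one_div, inv_inj] at h
  linear_combination -h

theorem iteratedDeriv_two_eq_two_mul_deriv_dslope [CompleteSpace 𝕜] [CharZero 𝕜]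
    (hf : AnalyticAt 𝕜 f x) : iteratedDeriv 2 f x = 2 * deriv (dslope f x) x := by
  rw [iteratedDeriv_succ_eq_mul_iteratedDeriv_dslope hf, iteratedDeriv_one]
  norm_num

theorem iteratedDeriv_three_eq_six_mul_deriv_dslope_dslope [CompleteSpace 𝕜] [CharZero 𝕜]
    (hf : AnalyticAt 𝕜 f x) : iteratedDeriv 3 f x = 6 * deriv (dslope (dslope f x) x) x := by
  rw [iteratedDeriv_succ_eq_mul_iteratedDeriv_dslope hf,
    iteratedDeriv_two_eq_two_mul_deriv_dslope (analyticAt_dslope_same hf)]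
  push_cast
  ring

theorem juliaTransform_self [CompleteSpace 𝕜] [CharZero 𝕜] (hf : AnalyticAt 𝕜 f x) :
    juliaTransform f x x = iteratedDeriv 2 f x / (2 * deriv f x ^ 2) := by
  rw [juliaTransform, dslope_same, dslope_same, iteratedDeriv_two_eq_two_mul_deriv_dslope hf,
    mul_div_mul_left _ _ two_ne_zero, sq]

theorem hasDerivAt_juliaTransform [CompleteSpace 𝕜] [CharZero 𝕜] (hf : AnalyticAt 𝕜 f x)
    (hd : deriv f x ≠ 0) :
    HasDerivAt (juliaTransform f x)
      ((2 * deriv f x * iteratedDeriv 3 f x - 3 * iteratedDeriv 2 f x ^ 2) /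
        (12 * deriv f x ^ 3)) x := by
  have hq := analyticAt_dslope_same hf
  have hs := analyticAt_dslope_same hq
  have hden : deriv f x * dslope f x x ≠ 0 := by
    rw [dslope_same]
    exact mul_ne_zero hd hd
  refine (hs.differentiableAt.hasDerivAt.div
    (hq.differentiableAt.hasDerivAt.const_mul (deriv f x)) hden).congr_deriv ?_
  rw [dslope_same, dslope_same, iteratedDeriv_two_eq_two_mul_deriv_dslope hf,
    iteratedDeriv_three_eq_six_mul_deriv_dslope_dslope hf]
  field_simp
  ring

end DifferenceQuotients

/-! ### Functions that are real on the real axis -/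

section RealOnReal

variable {f : ℂ → ℂ} {x : ℝ}

theorem im_deriv_eq_zero (hf : DifferentiableAt ℂ f x)
    (hreal : ∀ᶠ y : ℝ in 𝓝 x, (f y).im = 0) : (deriv f x).im = 0 := by
  have him : HasDerivAt (fun y : ℝ => (f y).im) (deriv f x).im x :=
    imCLM.hasFDerivAt.comp_hasDerivAt x hf.hasDerivAt.comp_ofReal
  exact him.unique ((hasDerivAt_const x (0 : ℝ)).congr_of_eventuallyEq hreal)

theorem eventually_im_iteratedDeriv_eq_zero (hf : AnalyticAt ℂ f x)
    (hreal : ∀ᶠ y : ℝ in 𝓝 x, (f y).im = 0) (n : ℕ) :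
    ∀ᶠ y : ℝ in 𝓝 x, (iteratedDeriv n f y).im = 0 := by
  induction n with
  | zero => simpa only [iteratedDeriv_zero] using hreal
  | succ n ih =>
    have hana : ∀ᶠ y : ℝ in 𝓝 x, AnalyticAt ℂ f y :=
      continuous_ofReal.continuousAt.eventually hf.eventually_analyticAt
    filter_upwards [hana, ih.eventually_nhds] with y hfy hy
    rw [iteratedDeriv_succ]
    have hn : AnalyticAt ℂ (iteratedDeriv n f) y := by
      rw [iteratedDeriv_eq_iterate]
      exact hfy.iterated_deriv n
    exact im_deriv_eq_zero hn.differentiableAt hy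

theorem im_iteratedDeriv_eq_zero (hf : AnalyticAt ℂ f x)
    (hreal : ∀ᶠ y : ℝ in 𝓝 x, (f y).im = 0) (n : ℕ) : (iteratedDeriv n f x).im = 0 :=
  (eventually_im_iteratedDeriv_eq_zero hf hreal n).self_of_nhds

theorem ofReal_re_iteratedDeriv (hf : AnalyticAt ℂ f x)
    (hreal : ∀ᶠ y : ℝ in 𝓝 x, (f y).im = 0) (n : ℕ) :
    ((iteratedDeriv n f x).re : ℂ) = iteratedDeriv n f x :=
  Complex.ext rfl (im_iteratedDeriv_eq_zero hf hreal n).symm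

theorem ofReal_re_deriv (hf : DifferentiableAt ℂ f x)
    (hreal : ∀ᶠ y : ℝ in 𝓝 x, (f y).im = 0) : ((deriv f x).re : ℂ) = deriv f x :=
  Complex.ext rfl (im_deriv_eq_zero hf hreal).symm

theorem juliaTransform_self_eq_ofReal (hf : AnalyticAt ℂ f x)
    (hreal : ∀ᶠ y : ℝ in 𝓝 x, (f y).im = 0) :
    juliaTransform f x x =
      ((iteratedDeriv 2 f x).re / (2 * (deriv f x).re ^ 2) : ℝ) := by
  push_cast
  rw [ofReal_re_iteratedDeriv hf hreal, ofReal_re_deriv hf.differentiableAt hreal,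
    juliaTransform_self hf]

theorem hasDerivAt_juliaTransform_ofReal (hf : AnalyticAt ℂ f x)
    (hreal : ∀ᶠ y : ℝ in 𝓝 x, (f y).im = 0) (hd : deriv f x ≠ 0) :
    HasDerivAt (juliaTransform f x)
      ((2 * (deriv f x).re * (iteratedDeriv 3 f x).re - 3 * (iteratedDeriv 2 f x).re ^ 2) /
        (12 * (deriv f x).re ^ 3) : ℝ) x := by
  push_cast
  rw [ofReal_re_iteratedDeriv hf hreal, ofReal_re_iteratedDeriv hf hreal,
    ofReal_re_deriv hf.differentiableAt hreal]
  exact hasDerivAt_juliaTransform hf hd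

end RealOnReal

/-! ### The Cayley transform -/

section Cayley

variable {w z ζ : ℂ}

/-- The Cayley transform based at `w`: for `w` in the upper half plane it maps the upper half plane
onto the unit disc, and `w` to `0`. -/
noncomputable def cayley (w z : ℂ) : ℂ := (z - w) / (z - conj w)

/-- The inverse of the Cayley transform based at `w`, from the unit disc to the upper half
plane. -/
noncomputable def cayleySymm (w ζ : ℂ) : ℂ := (w - conj w * ζ) / (1 - ζ)

theorem sub_conj_ne_zero (hw : 0 < w.im) (hz : 0 < z.im) : z - conj w ≠ 0 := fun h => by
  have him := congrArg im h
  simp only [sub_im, conj_im, zero_im] at him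
  linarith

theorem normSq_sub_conj (z w : ℂ) :
    normSq (z - conj w) = normSq (z - w) + 4 * (z.im * w.im) := by
  simp only [normSq_apply, sub_re, sub_im, conj_re, conj_im]
  ring

theorem normSq_cayley (w z : ℂ) :
    normSq (cayley w z) = normSq (z - w) / (normSq (z - w) + 4 * (z.im * w.im)) := by
  rw [cayley, normSq_div, normSq_sub_conj]

theorem norm_cayley_lt_one (hw : 0 < w.im) (hz : 0 < z.im) : ‖cayley w z‖ < 1 := by
  have hpos : 0 < 4 * (z.im * w.im) := by positivity
  rw [← sq_lt_one_iff₀ (norm_nonneg _), ← normSq_eq_norm_sq, normSq_cayley,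
    div_lt_one (add_pos_of_nonneg_of_pos (normSq_nonneg _) hpos)]
  exact lt_add_of_pos_right _ hpos

theorem norm_cayley_le_norm_cayley_iff {a b : ℂ} (ha : 0 < a.im) (hb : 0 < b.im) (hw : 0 < w.im)
    (hz : 0 < z.im) :
    ‖cayley a b‖ ≤ ‖cayley w z‖ ↔
      z.im * w.im * normSq (b - a) ≤ b.im * a.im * normSq (z - w) := by
  have hab : 0 < normSq (b - a) + 4 * (b.im * a.im) :=
    add_pos_of_nonneg_of_pos (normSq_nonneg _) (by positivity)
  have hwz : 0 < normSq (z - w) + 4 * (z.im * w.im) :=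
    add_pos_of_nonneg_of_pos (normSq_nonneg _) (by positivity)
  rw [← sq_le_sq₀ (norm_nonneg _) (norm_nonneg _), ← normSq_eq_norm_sq, ← normSq_eq_norm_sq,
    normSq_cayley, normSq_cayley, div_le_div_iff₀ hab hwz]
  constructor <;> intro h <;> linarith

theorem cayley_self (w : ℂ) : cayley w w = 0 := by rw [cayley, sub_self, zero_div]

theorem differentiableOn_cayley (hw : 0 < w.im) : DifferentiableOn ℂ (cayley w) {z | 0 < z.im} :=
  DifferentiableOn.div (by fun_prop) (by fun_prop) fun _ hz => sub_conj_ne_zero hw hz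

theorem one_sub_ne_zero_of_norm_lt_one (hζ : ‖ζ‖ < 1) : 1 - ζ ≠ 0 :=
  sub_ne_zero.2 fun h => hζ.ne (by rw [← h, norm_one])

theorem im_cayleySymm (w ζ : ℂ) :
    (cayleySymm w ζ).im = w.im * (1 - normSq ζ) / normSq (1 - ζ) := by
  rw [cayleySymm, div_im]
  simp only [sub_re, sub_im, mul_re, mul_im, conj_re, conj_im, one_re, one_im, normSq_apply]
  ring

theorem mapsTo_cayleySymm (hw : 0 < w.im) :
    Set.MapsTo (cayleySymm w) (ball 0 1) {z | 0 < z.im} := fun ζ hζ => by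
  have hζ' : ‖ζ‖ < 1 := mem_ball_zero_iff.1 hζ
  have hsq : normSq ζ < 1 := by
    rwa [normSq_eq_norm_sq, sq_lt_one_iff₀ (norm_nonneg _)]
  rw [Set.mem_ofPred_eq, im_cayleySymm]
  exact div_pos (mul_pos hw (sub_pos.2 hsq)) (normSq_pos.2 (one_sub_ne_zero_of_norm_lt_one hζ'))

theorem cayleySymm_zero (w : ℂ) : cayleySymm w 0 = w := by
  rw [cayleySymm, mul_zero, sub_zero, sub_zero, div_one]

theorem cayleySymm_cayley (hw : 0 < w.im) (hz : 0 < z.im) : cayleySymm w (cayley w z) = z := by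
  have hzw := sub_conj_ne_zero hw hz
  rw [cayleySymm, div_eq_iff (one_sub_ne_zero_of_norm_lt_one (norm_cayley_lt_one hw hz)), cayley]
  field_simp
  ring

theorem differentiableOn_cayleySymm (w : ℂ) : DifferentiableOn ℂ (cayleySymm w) (ball 0 1) :=
  DifferentiableOn.div (by fun_prop) (by fun_prop) fun _ hζ =>
    one_sub_ne_zero_of_norm_lt_one (mem_ball_zero_iff.1 hζ)

theorem norm_cayley_map_le_norm_cayley {f : ℂ → ℂ} (hd : DifferentiableOn ℂ f {z | 0 < z.im})
    (hf : Set.MapsTo f {z | 0 < z.im} {z | 0 < z.im}) (hw : 0 < w.im) (hz : 0 < z.im) :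
    ‖cayley (f w) (f z)‖ ≤ ‖cayley w z‖ := by
  let F : ℂ → ℂ := cayley (f w) ∘ f ∘ cayleySymm w
  have hFd : DifferentiableOn ℂ F (ball 0 1) :=
    (differentiableOn_cayley (hf hw)).comp
      (hd.comp (differentiableOn_cayleySymm w) (mapsTo_cayleySymm hw))
      (hf.comp (mapsTo_cayleySymm hw))
  have hFmaps : Set.MapsTo F (ball 0 1) (closedBall 0 1) := fun ζ hζ =>
    mem_closedBall_zero_iff.2 (norm_cayley_lt_one (hf hw) (hf (mapsTo_cayleySymm hw hζ))).le
  have hF0 : F 0 = 0 := by simp only [F, Function.comp_apply, cayleySymm_zero, cayley_self]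
  simpa only [F, Function.comp_apply, cayleySymm_cayley hw hz] using
    norm_le_norm_of_mapsTo_ball hFd hFmaps hF0 (norm_cayley_lt_one hw hz)

end Cayley

/-! ### Pick functions and Julia's inequality -/

theorem tendsto_ofReal_add_mul_I (x : ℝ) :
    Tendsto (fun t : ℝ => (x : ℂ) + t * I) (𝓝[>] 0) (𝓝[≠] (x : ℂ)) := by
  have hcont : Continuous fun t : ℝ => (x : ℂ) + t * I := by fun_prop
  refine tendsto_nhdsWithin_iff.2 ⟨?_, eventually_nhdsWithin_of_forall fun t (ht : 0 < t) => ?_⟩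
  · simpa using (hcont.tendsto 0).mono_left nhdsWithin_le_nhds
  · simpa using ht.ne'

theorem tendsto_im_div {f : ℂ → ℂ} {c : ℂ} {x : ℝ} (hc : HasDerivAt f c x)
    (hx : (f x).im = 0) :
    Tendsto (fun t : ℝ => (f (x + t * I)).im / t) (𝓝[>] 0) (𝓝 c.re) := by
  have hslope := (continuous_re.tendsto c).comp
    ((hasDerivAt_iff_tendsto_slope.1 hc).comp (tendsto_ofReal_add_mul_I x))
  refine hslope.congr fun t => ?_
  simp only [Function.comp_apply, slope_def_field, add_sub_cancel_left, mul_comm (t : ℂ) I,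
    div_mul_eq_div_div, div_ofReal_re, div_I, neg_re, mul_I_re, neg_neg, sub_im, hx, sub_zero]

/-- Pick (or Herglotz–Nevanlinna) functions: holomorphic maps of the open upper half plane into its
closure. The values of `f` outside the open upper half plane are unconstrained. -/
structure IsPickFunction (f : ℂ → ℂ) : Prop where
  differentiableOn : DifferentiableOn ℂ f {z | 0 < z.im}
  im_nonneg : ∀ z : ℂ, 0 < z.im → 0 ≤ (f z).im

namespace IsPickFunction

variable {f : ℂ → ℂ} {c : ℂ} {x : ℝ} {w z : ℂ}

theorem schwarz_pick (hf : IsPickFunction f) (hw : 0 < w.im) (hz : 0 < z.im) :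
    z.im * w.im * normSq (f z - f w) ≤ (f z).im * (f w).im * normSq (z - w) := by
  -- Apply the strict case to `f + εi` and let `ε → 0`.
  have hstrict : ∀ ε > 0, z.im * w.im * normSq (f z - f w) ≤
      ((f z).im + ε) * ((f w).im + ε) * normSq (z - w) := fun ε hε => by
    have hmaps : Set.MapsTo (fun u => f u + ε * I) {u | 0 < u.im} {u | 0 < u.im} := fun u hu => by
      simpa using add_pos_of_nonneg_of_pos (hf.im_nonneg u hu) hε
    simpa using (norm_cayley_le_norm_cayley_iff (hmaps hw) (hmaps hz) hw hz).1
      (norm_cayley_map_le_norm_cayley (hf.differentiableOn.add_const _) hmaps hw hz)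
  have hcont : Continuous fun ε : ℝ => ((f z).im + ε) * ((f w).im + ε) * normSq (z - w) := by
    fun_prop
  have hlim := (hcont.tendsto 0).mono_left (nhdsWithin_le_nhds (s := Set.Ioi 0))
  simpa only [add_zero] using ge_of_tendsto hlim (eventually_nhdsWithin_of_forall hstrict)

theorem eq_of_im_eq_zero (hf : IsPickFunction f) (hw : 0 < w.im) (hfw : (f w).im = 0)
    (hz : 0 < z.im) : f z = f w := by
  have h := hf.schwarz_pick hw hz
  rw [hfw, mul_zero, zero_mul] at h
  exact sub_eq_zero.1 (normSq_eq_zero.1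
    ((nonpos_of_mul_nonpos_right h (mul_pos hz hw)).antisymm (normSq_nonneg _)))

theorem apply_ne_of_exists_ne (hf : IsPickFunction f) (hx : (f x).im = 0)
    (hne : ∃ w : ℂ, 0 < w.im ∧ f w ≠ f x) (hz : 0 < z.im) : f z ≠ f x := fun hfz => by
  obtain ⟨w, hw, hfw⟩ := hne
  exact hfw ((hf.eq_of_im_eq_zero hz (hfz ▸ hx) hw).trans hfz)

/-- The limit of `IsPickFunction.schwarz_pick` divided by `Im w` as `w → x` vertically. -/
theorem julia (hf : IsPickFunction f) (hc : HasDerivAt f c x) (hx : (f x).im = 0)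
    (hz : 0 < z.im) :
    z.im * normSq (f z - f x) ≤ (f z).im * c.re * normSq (z - x) := by
  have hw := (tendsto_ofReal_add_mul_I x).mono_right nhdsWithin_le_nhds
  have hleft : Tendsto (fun t : ℝ => z.im * normSq (f z - f (x + t * I))) (𝓝[>] 0)
      (𝓝 (z.im * normSq (f z - f x))) :=
    ((continuous_normSq.tendsto _).comp ((hc.continuousAt.tendsto.comp hw).const_sub _)).const_mul _
  have hright : Tendsto (fun t : ℝ => (f z).im * ((f (x + t * I)).im / t) *
      normSq (z - (x + t * I))) (𝓝[>] 0) (𝓝 ((f z).im * c.re * normSq (z - x))) :=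
    ((tendsto_im_div hc hx).const_mul _).mul ((continuous_normSq.tendsto _).comp (hw.const_sub _))
  refine le_of_tendsto_of_tendsto hleft hright
    (eventually_nhdsWithin_of_forall fun t (ht : 0 < t) => ?_)
  have him : ((x : ℂ) + t * I).im = t := by simp
  have hsp := hf.schwarz_pick (him.symm ▸ ht) hz
  rw [him] at hsp
  beta_reduce
  rw [mul_div_assoc', div_mul_eq_mul_div, le_div_iff₀ ht]
  linarith

theorem re_deriv_nonneg (hf : IsPickFunction f) (hc : HasDerivAt f c x) (hx : (f x).im = 0) :
    0 ≤ c.re :=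
  ge_of_tendsto (tendsto_im_div hc hx) (eventually_nhdsWithin_of_forall fun t (ht : 0 < t) =>
    div_nonneg (hf.im_nonneg _ (by simpa using ht)) ht.le)

theorem eq_of_re_deriv_eq_zero (hf : IsPickFunction f) (hc : HasDerivAt f c x)
    (hx : (f x).im = 0) (hc0 : c.re = 0) (hz : 0 < z.im) : f z = f x := by
  have h := hf.julia hc hx hz
  rw [hc0, mul_zero, zero_mul] at h
  exact sub_eq_zero.1 (normSq_eq_zero.1
    ((nonpos_of_mul_nonpos_right h hz).antisymm (normSq_nonneg _)))

theorem re_deriv_pos (hf : IsPickFunction f) (hc : HasDerivAt f c x) (hx : (f x).im = 0)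
    (hne : ∃ w : ℂ, 0 < w.im ∧ f w ≠ f x) : 0 < c.re := by
  obtain ⟨w, hw, hfw⟩ := hne
  exact (hf.re_deriv_nonneg hc hx).lt_of_ne' fun hc0 =>
    hfw (hf.eq_of_re_deriv_eq_zero hc hx hc0 hw)

theorem deriv_ne_zero (hf : IsPickFunction f) (hd : DifferentiableAt ℂ f x) (hx : (f x).im = 0)
    (hne : ∃ w : ℂ, 0 < w.im ∧ f w ≠ f x) : deriv f x ≠ 0 := fun h =>
  (hf.re_deriv_pos hd.hasDerivAt hx hne).ne' (by rw [h, zero_re])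

/-! ### The Schwarzian derivative of a Pick function -/

theorem im_juliaTransform_nonneg (hf : IsPickFunction f) (hd : DifferentiableAt ℂ f x)
    (hreal : ∀ᶠ y : ℝ in 𝓝 x, (f y).im = 0) (hz : 0 < z.im) (hfz : f z ≠ f x) :
    0 ≤ (juliaTransform f x z).im := by
  have hx : (f x).im = 0 := hreal.self_of_nhds
  have hc := hf.re_deriv_pos hd.hasDerivAt hx ⟨z, hz, hfz⟩
  have hzx : 0 < normSq (z - x) := normSq_pos.2 (sub_ne_zero.2 (ne_of_apply_ne f hfz))
  have hfzx : 0 < normSq (f z - f x) := normSq_pos.2 (sub_ne_zero.2 hfz)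
  have him : (juliaTransform f x z).im =
      (f z).im / normSq (f z - f x) - z.im / ((deriv f x).re * normSq (z - x)) := by
    rw [juliaTransform_of_ne (hf.deriv_ne_zero hd hx ⟨z, hz, hfz⟩) hfz,
      ← ofReal_re_deriv hd hreal, one_div, one_div, mul_inv, ← ofReal_inv, sub_im, im_ofReal_mul,
      inv_im, inv_im, sub_im, sub_im, ofReal_im, hx, ofReal_re]
    field_simp
    ring
  rw [him, sub_nonneg, div_le_div_iff₀ (by positivity) hfzx]
  linarith [hf.julia hd.hasDerivAt hx hz]

theorem isPickFunction_juliaTransform (hf : IsPickFunction f) (hd : DifferentiableAt ℂ f x)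
    (hreal : ∀ᶠ y : ℝ in 𝓝 x, (f y).im = 0) (hne : ∃ w : ℂ, 0 < w.im ∧ f w ≠ f x) :
    IsPickFunction (juliaTransform f x) := by
  have hx : (f x).im = 0 := hreal.self_of_nhds
  have hfz : ∀ z : ℂ, 0 < z.im → f z ≠ f x := fun z => hf.apply_ne_of_exists_ne hx hne
  have hx' : (x : ℂ) ∉ {z : ℂ | 0 < z.im} := by simp
  have hq : DifferentiableOn ℂ (dslope f x) {z | 0 < z.im} :=
    (differentiableOn_dslope_of_notMem hx').2 hf.differentiableOn
  have hq0 : ∀ z : ℂ, 0 < z.im → dslope f x z ≠ 0 := fun z hz h0 =>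
    hfz z hz (by rw [← sub_eq_zero, ← sub_smul_dslope f x z, h0, smul_zero])
  exact ⟨((differentiableOn_dslope_of_notMem hx').2 hq).div (hq.const_mul _) fun z hz =>
      mul_ne_zero (hf.deriv_ne_zero hd hx hne) (hq0 z hz),
    fun z hz => hf.im_juliaTransform_nonneg hd hreal hz (hfz z hz)⟩

/-- The Schwarzian derivative `f''' / f' - (3 / 2) (f'' / f')²` at `x`, multiplied by
`2 (f' x)²`. -/
theorem schwarzian_nonneg (hf : IsPickFunction f) (han : AnalyticAt ℂ f x)
    (hreal : ∀ᶠ y : ℝ in 𝓝 x, (f y).im = 0) (hne : ∃ w : ℂ, 0 < w.im ∧ f w ≠ f x) :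
    0 ≤ 2 * (deriv f x).re * (iteratedDeriv 3 f x).re - 3 * (iteratedDeriv 2 f x).re ^ 2 := by
  have hd := han.differentiableAt
  have hx : (f x).im = 0 := hreal.self_of_nhds
  have hpos : 0 < 12 * (deriv f x).re ^ 3 := by
    have hderiv := hf.re_deriv_pos hd.hasDerivAt hx hne
    positivity
  have hnonneg := (hf.isPickFunction_juliaTransform hd hreal hne).re_deriv_nonneg
    (hasDerivAt_juliaTransform_ofReal han hreal (hf.deriv_ne_zero hd hx hne))
    (by rw [juliaTransform_self_eq_ofReal han hreal, ofReal_im])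
  rwa [ofReal_re, le_div_iff₀ hpos, zero_mul] at hnonneg

theorem eq_add_deriv_mul_of_re_iteratedDeriv_three_eq_zero (hf : IsPickFunction f)
    (han : AnalyticAt ℂ f x) (hreal : ∀ᶠ y : ℝ in 𝓝 x, (f y).im = 0)
    (hne : ∃ w : ℂ, 0 < w.im ∧ f w ≠ f x) (h₃ : (iteratedDeriv 3 f x).re = 0)
    (hz : 0 < z.im) : f z = f x + deriv f x * (z - x) := by
  have hd := han.differentiableAt
  have hx : (f x).im = 0 := hreal.self_of_nhds
  have hd0 : deriv f x ≠ 0 := hf.deriv_ne_zero hd hx hne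
  have h₂ : (iteratedDeriv 2 f x).re = 0 := by
    have hsch := hf.schwarzian_nonneg han hreal hne
    rw [h₃] at hsch
    exact pow_eq_zero_iff two_ne_zero |>.1 (le_antisymm (by linarith) (sq_nonneg _))
  have hself : juliaTransform f x x = 0 := by
    rw [juliaTransform_self_eq_ofReal han hreal, h₂, zero_div, ofReal_zero]
  have hzero : juliaTransform f x z = juliaTransform f x x :=
    (hf.isPickFunction_juliaTransform hd hreal hne).eq_of_re_deriv_eq_zero
      (hasDerivAt_juliaTransform_ofReal han hreal hd0) (by rw [hself, zero_im])
      (by rw [ofReal_re, h₂, h₃]; ring) hz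
  exact eq_add_deriv_mul_of_juliaTransform_eq_zero hd0 (hf.apply_ne_of_exists_ne hx hne hz)
    (hzero.trans hself)

end IsPickFunction

theorem not_affine_of_re_le {f : ℂ → ℂ} {x B : ℝ} (hne : ∃ w : ℂ, 0 < w.im ∧ f w ≠ f x)
    (hB : ∀ z : ℂ, 0 < z.im → (f z).re ≤ B) :
    ¬∃ a : ℝ, ∀ z : ℂ, 0 < z.im → f z = f x + a * (z - x) := by
  rintro ⟨a, ha⟩
  obtain ⟨w, hw, hfw⟩ := hne
  have ha0 : a ≠ 0 := by
    rintro rfl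
    exact hfw (by simpa using ha w hw)
  let t : ℝ := (B + 1 - (f x).re) / a
  have hval : (f (x + t + I)).re = B + 1 := by
    rw [ha _ (by simp), add_re, re_ofReal_mul]
    simp [t, mul_div_cancel₀ _ ha0]
  linarith [hB (x + t + I) (by simp)]

theorem MO_first_and_third_derivative_pos_general {f : ℂ → ℂ} {x : ℝ} (hf : IsPickFunction f)
    (han : AnalyticAt ℂ f x) (hreal : ∀ᶠ y : ℝ in 𝓝 x, (f y).im = 0)
    (haff : ¬∃ a : ℝ, ∀ z : ℂ, 0 < z.im → f z = f x + a * (z - x)) :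
    (0 < (iteratedDeriv 1 f x).re ∧ (iteratedDeriv 1 f x).im = 0)
    ∧ (0 < (iteratedDeriv 3 f x).re ∧ (iteratedDeriv 3 f x).im = 0) := by
  have hd := han.differentiableAt
  have hne : ∃ w : ℂ, 0 < w.im ∧ f w ≠ f x := by
    by_contra! hconst
    exact haff ⟨0, fun z hz => by rw [hconst z hz, ofReal_zero, zero_mul, add_zero]⟩
  have h₁ : 0 < (deriv f x).re := hf.re_deriv_pos hd.hasDerivAt hreal.self_of_nhds hne
  have h₃ : (iteratedDeriv 3 f x).re ≠ 0 := fun h0 =>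
    haff ⟨(deriv f x).re, fun z hz => by
      rw [ofReal_re_deriv hd hreal]
      exact hf.eq_add_deriv_mul_of_re_iteratedDeriv_three_eq_zero han hreal hne h0 hz⟩
  have h₃' : 0 ≤ (iteratedDeriv 3 f x).re := by
    have hsch := hf.schwarzian_nonneg han hreal hne
    refine nonneg_of_mul_nonneg_right (a := 2 * (deriv f x).re) ?_ (by positivity)
    linarith [sq_nonneg (iteratedDeriv 2 f x).re]
  exact ⟨⟨by rwa [iteratedDeriv_one], im_iteratedDeriv_eq_zero han hreal 1⟩,
    h₃'.lt_of_ne' h₃, im_iteratedDeriv_eq_zero han hreal 3⟩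

/-- **Positivity of `Θ'` and `Θ'''` inside the spectrum** (part of Lemma 2.1).
If `x` lies in the interior of `Σ = σ(H_V)` (with `(x-r, x+r) ⊆ Σ`), and `Θ̃` is an analytic
extension through `(x-r, x+r)` of the Marchenko–Ostrovski mapping, then `Θ̃'(x)` and `Θ̃'''(x)`
are strictly positive real numbers. -/
theorem MO_first_and_third_derivative_pos
    (p : ℕ) (hp : 1 ≤ p) (V : ℤ → ℝ) (hV : ∀ n : ℤ, V (n + p) = V n)
    (H : lp (fun _ : ℤ => ℂ) 2 →L[ℂ] lp (fun _ : ℤ => ℂ) 2)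
    (hH : ∀ ψ : lp (fun _ : ℤ => ℂ) 2, ∀ n : ℤ,
      (H ψ : ℤ → ℂ) n = ψ (n - 1) + ψ (n + 1) + (V n : ℂ) * ψ n)
    (x r : ℝ) (hr : 0 < r)
    (hspec : ∀ y : ℝ, y ∈ Set.Ioo (x - r) (x + r) → (y : ℂ) ∈ spectrum ℂ H)
    (Θ : ℂ → ℂ)
    (hana : AnalyticOnNhd ℂ Θ ({z : ℂ | 0 < z.im} ∪ Metric.ball (x : ℂ) r))
    (hmaps : ∀ z : ℂ, 0 < z.im → 0 < (Θ z).im)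
    (hre : ∀ z : ℂ, 0 < z.im → (Θ z).re ∈ Set.Icc (-Real.pi) 0)
    (hdisc : ∀ z : ℂ, 0 < z.im →
      2 * Complex.cos ((p : ℂ) * Θ z) = floquetDiscriminant p V z)
    (hreal : ∀ y : ℝ, y ∈ Set.Ioo (x - r) (x + r) → (Θ (y : ℂ)).im = 0) :
    (0 < (iteratedDeriv 1 Θ (x : ℂ)).re ∧ (iteratedDeriv 1 Θ (x : ℂ)).im = 0)
    ∧ (0 < (iteratedDeriv 3 Θ (x : ℂ)).re ∧ (iteratedDeriv 3 Θ (x : ℂ)).im = 0) := by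
  have hx : x ∈ Set.Ioo (x - r) (x + r) := ⟨by linarith, by linarith⟩
  have hne : ∃ w : ℂ, 0 < w.im ∧ Θ w ≠ Θ x :=
    ⟨I, by simp, fun h => (hmaps I (by simp)).ne' (h ▸ hreal x hx)⟩
  exact MO_first_and_third_derivative_pos_general
    ⟨fun z hz => (hana z (Or.inl hz)).differentiableAt.differentiableWithinAt,
      fun z hz => (hmaps z hz).le⟩
    (hana x (Or.inr (mem_ball_self hr))) (eventually_of_mem (Ioo_mem_nhds hx.1 hx.2) hreal)
    (not_affine_of_re_le hne fun z hz => (hre z hz).2)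
end

section
/- Let p ≥ 1 and let V : ℤ → ℝ be p-periodic. Let λ_m < λ_n be real numbers such that [λ_m, λ_n] is a connected component of Σ (that is, [λ_m, λ_n] ⊆ Σ and there is ε > 0 with ((λ_m − ε, λ_m) ∪ (λ_n, λ_n + ε)) ∩ Σ = ∅). Suppose Θ̃ : ℂ → ℂ is complex-analytic on ℂ₊ ∪ U for some open set U ⊆ ℂ containing the real interval (λ_m, λ_n), maps ℂ₊ into ℂ₊, satisfies Re Θ̃(z) ∈ [−π, 0] and 2 cos(p Θ̃(z)) = Δ(z) for all z ∈ ℂ₊, and takes real values on (λ_m, λ_n). Then the real-valued function x ↦ Θ̃''(x) on (λ_m, λ_n) tends to −∞ as x → λ_m from the right and tends to +∞ as x → λ_n from the left. -/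
/-! The discriminant is a real polynomial `D`. Where `|D| ≤ 2` the monodromy matrix has a unimodular
eigenvalue, hence there is a Bloch solution of periodic modulus, and its truncations show that the
energy lies in the spectrum. So `D² > 4` on the gaps next to the band, while `D = 2 cos (p Θ)` with
`Θ` real gives `D² ≤ 4` on the band; thus `D² = 4` at both edges.

The edges are crossed transversally. Since `Θ` preserves the upper half plane, `D = 2 cos (p Θ)` has
no zero off the real line, so the Laguerre inequality `D'² - D D'' > 0` holds wherever `D ≠ 0`. If
`D'` vanished at an edge, then `(D²)'' = 2 D D'' < 0` would make the edge a local maximum of `D²`,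
contradicting `D² > 4` on the gap. As `D² ≤ 4` on the band, `D D' < 0` at the left edge and
`D D' > 0` at the right edge.

Finally `Θ' ≥ 0` on the band, again because `Θ` preserves the upper half plane, and two
differentiations of `D = 2 cos (p Θ)` give `p² (4 - D²) Θ'² = D'²` and
`D' Θ'' = Θ' (D'' + p² D Θ'²)`. At an edge the first relation forces `Θ' → +∞`, and then
`Θ'' = Θ' (D''/D' + p² (D/D') Θ'²)` diverges with the sign of `D D'` at that edge. -/

open scoped ENNReal Topology

/-! ### The discriminant as a real polynomial -/

section Discriminant

open Polynomial

/-- The transfer matrix over `ℝ[X]`, with the spectral parameter as the indeterminate. -/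
noncomputable def transferPolynomialMatrix (V : ℤ → ℝ) (n : ℤ) : Matrix (Fin 2) (Fin 2) ℝ[X] :=
  !![X - C (V n), -1; 1, 0]

/-- The Floquet discriminant as a real polynomial, so that its real-valuedness on the real axis
and its derivatives are at hand. -/
noncomputable def discriminantPolynomial (p : ℕ) (V : ℤ → ℝ) : ℝ[X] :=
  Matrix.trace ((List.range p).map fun i => transferPolynomialMatrix V ((p : ℤ) - i)).prod

lemma mapMatrix_aeval_transferPolynomialMatrix (V : ℤ → ℝ) (n : ℤ) (z : ℂ) :
    (aeval z).mapMatrix (transferPolynomialMatrix V n) = transferMatrix V n z := by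
  ext i j
  fin_cases i <;> fin_cases j <;> simp [transferPolynomialMatrix, transferMatrix]

lemma aeval_discriminantPolynomial (p : ℕ) (V : ℤ → ℝ) (z : ℂ) :
    aeval z (discriminantPolynomial p V) = floquetDiscriminant p V z := by
  rw [discriminantPolynomial, AddMonoidHom.map_trace, floquetDiscriminant, monodromyMatrix,
    ← AlgHom.mapMatrix_apply, map_list_prod, List.map_map]
  simp only [Function.comp_def, mapMatrix_aeval_transferPolynomialMatrix]

lemma floquetDiscriminant_ofReal (p : ℕ) (V : ℤ → ℝ) (x : ℝ) :
    floquetDiscriminant p V x = ((discriminantPolynomial p V).eval x : ℝ) := by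
  rw [← aeval_discriminantPolynomial]
  exact aeval_algebraMap_apply_eq_algebraMap_eval x _

end Discriminant

/-! ### Bloch solutions -/

section Bloch

open scoped Matrix

lemma monodromyMatrix_zero (V : ℤ → ℝ) (z : ℂ) : monodromyMatrix 0 V z = 1 := rfl

lemma monodromyMatrix_succ (n : ℕ) (V : ℤ → ℝ) (z : ℂ) :
    monodromyMatrix (n + 1) V z = transferMatrix V ((n : ℤ) + 1) z * monodromyMatrix n V z := by
  simp [monodromyMatrix, List.range_succ_eq_map, ← List.map_eq_flatMap, Function.comp_def]

lemma det_monodromyMatrix (n : ℕ) (V : ℤ → ℝ) (z : ℂ) : (monodromyMatrix n V z).det = 1 := by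
  induction n with
  | zero => simp [monodromyMatrix_zero]
  | succ n ih =>
    rw [monodromyMatrix_succ, Matrix.det_mul, ih]
    simp [transferMatrix, Matrix.det_fin_two]

lemma monodromyMatrix_add_period {p : ℕ} {V : ℤ → ℝ} (hV : Function.Periodic V p) (n : ℕ)
    (z : ℂ) : monodromyMatrix (n + p) V z = monodromyMatrix n V z * monodromyMatrix p V z := by
  induction n with
  | zero => simp [monodromyMatrix_zero]
  | succ n ih =>
    have hVn : V (((n + p : ℕ) : ℤ) + 1) = V (n + 1) := by
      rw [← hV (n + 1)]
      push_cast
      congr 1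
      ring
    rw [add_right_comm, monodromyMatrix_succ, ih, monodromyMatrix_succ, mul_assoc]
    simp only [transferMatrix, hVn]

/-- If `tr M = 2 cos α`, the characteristic equation `μ² - (tr M) μ + 1 = 0` has the solution
`μ = e^{iα}`. -/
lemma exists_mulVec_eq_smul_of_abs_trace_le_two {M : Matrix (Fin 2) (Fin 2) ℂ} (hdet : M.det = 1)
    {d : ℝ} (htr : M.trace = d) (hd : |d| ≤ 2) :
    ∃ μ : ℂ, ‖μ‖ = 1 ∧ ∃ v ≠ 0, M *ᵥ v = μ • v := by
  obtain ⟨hd_lower, hd_upper⟩ := abs_le.1 hd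
  obtain ⟨α, rfl⟩ : ∃ α, 2 * Real.cos α = d :=
    ⟨Real.arccos (d / 2), by rw [Real.cos_arccos] <;> linarith⟩
  refine ⟨Complex.exp (α * Complex.I), Complex.norm_exp_ofReal_mul_I α, ?_⟩
  have hroot : M.charpoly.IsRoot (Complex.exp (α * Complex.I)) := by
    simp only [Polynomial.IsRoot, Matrix.charpoly_fin_two, htr, hdet, Complex.exp_mul_I]
    push_cast
    simp only [Polynomial.eval_add, Polynomial.eval_sub, Polynomial.eval_mul,
      Polynomial.eval_pow, Polynomial.eval_X, Polynomial.eval_C]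
    linear_combination
      Complex.sin α ^ 2 * Complex.I_sq - Complex.sin_sq_add_cos_sq (α : ℂ)
  obtain ⟨v, hv⟩ := (Module.End.hasEigenvalue_iff_isRoot_charpoly _ _).2
    ((Matrix.charpoly_toLin' M).symm ▸ hroot) |>.exists_hasEigenvector
  exact ⟨v, hv.2, by simpa using hv.apply_eq_smul⟩

/-- `u` solves the eigenvalue equation `u (n - 1) + u (n + 1) + V n * u n = z * u n` at every site
`n ≥ 1` of the half-line. -/
def IsHalfLineSolution (V : ℤ → ℝ) (z : ℂ) (u : ℕ → ℂ) : Prop :=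
  ∀ n : ℕ, u (n + 2) = (z - V (n + 1)) * u (n + 1) - u n

lemma monodromyMatrix_succ_mulVec_zero (n : ℕ) (V : ℤ → ℝ) (z : ℂ) (v : Fin 2 → ℂ) :
    (monodromyMatrix (n + 1) V z *ᵥ v) 0 =
      (z - V (n + 1)) * (monodromyMatrix n V z *ᵥ v) 0 - (monodromyMatrix n V z *ᵥ v) 1 := by
  rw [monodromyMatrix_succ, ← Matrix.mulVec_mulVec]
  simp [transferMatrix, sub_eq_add_neg, mul_comm]

lemma monodromyMatrix_succ_mulVec_one (n : ℕ) (V : ℤ → ℝ) (z : ℂ) (v : Fin 2 → ℂ) :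
    (monodromyMatrix (n + 1) V z *ᵥ v) 1 = (monodromyMatrix n V z *ᵥ v) 0 := by
  rw [monodromyMatrix_succ, ← Matrix.mulVec_mulVec]
  simp [transferMatrix]

lemma isHalfLineSolution_monodromyMatrix_mulVec (V : ℤ → ℝ) (z : ℂ) (v : Fin 2 → ℂ) :
    IsHalfLineSolution V z fun n => (monodromyMatrix n V z *ᵥ v) 1 := fun n => by
  simp only [monodromyMatrix_succ_mulVec_one, monodromyMatrix_succ_mulVec_zero]

lemma exists_isHalfLineSolution_norm_periodic {p : ℕ} {V : ℤ → ℝ} (hV : Function.Periodic V p)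
    {z : ℂ} {d : ℝ} (hd : |d| ≤ 2) (hΔ : floquetDiscriminant p V z = d) :
    ∃ u : ℕ → ℂ, IsHalfLineSolution V z u ∧ u ≠ 0 ∧ Function.Periodic (fun n => ‖u n‖) p := by
  obtain ⟨μ, hμ, v, hv, hMv⟩ :=
    exists_mulVec_eq_smul_of_abs_trace_le_two (det_monodromyMatrix p V z) hΔ hd
  refine ⟨_, isHalfLineSolution_monodromyMatrix_mulVec V z v, fun hu => hv ?_, fun n => ?_⟩
  · have h₀ := congrFun hu 0
    have h₁ := congrFun hu 1
    simp only [monodromyMatrix_succ_mulVec_one, monodromyMatrix_zero, Matrix.one_mulVec,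
      Pi.zero_apply] at h₀ h₁
    ext i
    fin_cases i <;> assumption
  · simp [monodromyMatrix_add_period hV, ← Matrix.mulVec_mulVec, hMv, Matrix.mulVec_smul, hμ]

lemma bddAbove_range_of_periodic {α : Type*} [LinearOrder α] [Nonempty α] {f : ℕ → α} {p : ℕ}
    (hf : Function.Periodic f p) (hp : p ≠ 0) : BddAbove (Set.range f) := by
  refine ((Set.finite_lt_nat p).image f).bddAbove.mono ?_
  rintro _ ⟨n, rfl⟩
  exact ⟨n % p, Nat.mod_lt n (Nat.pos_of_ne_zero hp), hf.map_mod_nat n⟩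

lemma eq_const_of_periodic_of_tendsto {α : Type*} [TopologicalSpace α] [T2Space α] {f : ℕ → α}
    {p : ℕ} {a : α} (hf : Function.Periodic f p) (hp : p ≠ 0)
    (ha : Filter.Tendsto f Filter.atTop (𝓝 a)) (n : ℕ) : f n = a := by
  have hsub : Filter.Tendsto (fun k : ℕ => n + k * p) Filter.atTop Filter.atTop :=
    Filter.tendsto_atTop_mono (fun k => (Nat.le_mul_of_pos_right k (Nat.pos_of_ne_zero hp)).trans
      (Nat.le_add_left _ n)) Filter.tendsto_id
  refine tendsto_nhds_unique (tendsto_const_nhds.congr fun k => ?_) (ha.comp hsub)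
  exact (hf.nat_mul k n).symm

end Bloch

/-! ### Weyl sequences and the spectrum -/

section Spectrum

/-- `H` is the discrete Schrödinger operator on `ℓ²(ℤ)` with potential `V`. -/
def IsSchrodingerOperator (V : ℤ → ℝ)
    (H : lp (fun _ : ℤ => ℂ) 2 →L[ℂ] lp (fun _ : ℤ => ℂ) 2) : Prop :=
  ∀ ψ : lp (fun _ : ℤ => ℂ) 2, ∀ n : ℤ,
    (H ψ : ℤ → ℂ) n = ψ (n - 1) + ψ (n + 1) + (V n : ℂ) * ψ n

variable {V : ℤ → ℝ} {H : lp (fun _ : ℤ => ℂ) 2 →L[ℂ] lp (fun _ : ℤ => ℂ) 2} {z : ℂ} {u : ℕ → ℂ}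

lemma IsSchrodingerOperator.apply_single (hH : IsSchrodingerOperator V H) (k : ℤ) (a : ℂ) :
    H (lp.single 2 k a) =
      lp.single 2 (k - 1) a + lp.single 2 (k + 1) a + lp.single 2 k (V k * a) := by
  ext n
  have hprev : n - 1 = k ↔ n = k + 1 := by omega
  have hnext : n + 1 = k ↔ n = k - 1 := by omega
  rw [hH _ n]
  simp only [lp.coeFn_add, lp.coeFn_single, Pi.add_apply, Pi.single_apply, hprev, hnext]
  rcases eq_or_ne n k with rfl | hnk
  · simp
  · simp [hnk, add_comm]

lemma norm_sq_sum_single_embedding {ι κ E : Type*} [DecidableEq κ] [NormedAddCommGroup E]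
    (e : ι ↪ κ) (f : ι → E) (s : Finset ι) :
    ‖∑ i ∈ s, lp.single (E := fun _ : κ => E) 2 (e i) (f i)‖ ^ 2 = ∑ i ∈ s, ‖f i‖ ^ 2 := by
  have h := lp.norm_sum_single (E := fun _ : κ => E) (p := 2) (by norm_num)
    (Function.extend e f 0) (s.map e)
  simpa [e.injective.extend_apply] using h

/-- The restriction of `u` to the sites `1, …, M`, as a vector in `ℓ²(ℤ)`. -/
noncomputable def truncation (u : ℕ → ℂ) (M : ℕ) : lp (fun _ : ℤ => ℂ) 2 :=
  ∑ j ∈ Finset.range M, lp.single 2 ((j : ℤ) + 1) (u (j + 1))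

lemma norm_truncation_sq (u : ℕ → ℂ) (M : ℕ) :
    ‖truncation u M‖ ^ 2 = ∑ j ∈ Finset.range M, ‖u (j + 1)‖ ^ 2 :=
  norm_sq_sum_single_embedding (Nat.castEmbedding.trans (addRightEmbedding (1 : ℤ)))
    (fun j => u (j + 1)) (Finset.range M)

lemma IsHalfLineSolution.smul_truncation_sub_apply (hu : IsHalfLineSolution V z u)
    (hH : IsSchrodingerOperator V H) (M : ℕ) :
    z • truncation u M - H (truncation u M) =
      lp.single 2 1 (u 0) - lp.single 2 0 (u 1)
        + (lp.single 2 (M : ℤ) (u (M + 1)) - lp.single 2 ((M : ℤ) + 1) (u M)) := by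
  induction M with
  | zero => simp [truncation]
  | succ M ih =>
    have hsucc : truncation u (M + 1) =
        truncation u M + lp.single 2 ((M : ℤ) + 1) (u (M + 1)) := Finset.sum_range_succ _ _
    rw [hsucc, smul_add, map_add, add_sub_add_comm, ih, hH.apply_single, ← lp.single_smul,
      hu M, lp.single_sub, sub_mul, lp.single_sub, smul_eq_mul, add_sub_cancel_right]
    push_cast
    abel

lemma IsHalfLineSolution.norm_smul_truncation_sub_apply_le (hu : IsHalfLineSolution V z u)
    (hH : IsSchrodingerOperator V H) {C : ℝ} (hC : ∀ n, ‖u n‖ ≤ C) (M : ℕ) :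
    ‖z • truncation u M - H (truncation u M)‖ ≤ 4 * C := by
  have hnorm (k : ℤ) (n : ℕ) : ‖lp.single (E := fun _ : ℤ => ℂ) 2 k (u n)‖ ≤ C := by
    rw [lp.norm_single two_pos]
    exact hC n
  rw [hu.smul_truncation_sub_apply hH]
  calc _ ≤ (C + C) + (C + C) := norm_add_le_of_le
        (norm_sub_le_of_le (hnorm _ _) (hnorm _ _)) (norm_sub_le_of_le (hnorm _ _) (hnorm _ _))
    _ = 4 * C := by ring

/-- If `z - H` had a bounded inverse, the truncations of `u` would be bounded in `ℓ²(ℤ)`, because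
their images under `z - H` are. -/
theorem IsHalfLineSolution.mem_spectrum (hu : IsHalfLineSolution V z u)
    (hH : IsSchrodingerOperator V H) (hbdd : BddAbove (Set.range fun n => ‖u n‖))
    (hsum : ¬ Summable fun n => ‖u n‖ ^ 2) : z ∈ spectrum ℂ H := by
  by_contra hz
  obtain ⟨C, hC⟩ := hbdd
  obtain ⟨B, hB⟩ := (spectrum.notMem_iff.1 hz).exists_left_inv
  have hinv (M : ℕ) : B (z • truncation u M - H (truncation u M)) = truncation u M :=
    DFunLike.congr_fun hB _
  have hle (M : ℕ) : ‖truncation u M‖ ≤ ‖B‖ * (4 * C) := by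
    rw [← hinv M]
    exact B.le_opNorm_of_le (hu.norm_smul_truncation_sub_apply_le hH (Set.forall_mem_range.1 hC) M)
  refine hsum ((summable_nat_add_iff 1).1 ?_)
  refine summable_of_sum_range_le (c := (‖B‖ * (4 * C)) ^ 2) (fun _ => by positivity) fun M => ?_
  rw [← norm_truncation_sq]
  gcongr
  exact hle M

theorem IsSchrodingerOperator.mem_spectrum_of_abs_discriminant_le_two
    (hH : IsSchrodingerOperator V H) {p : ℕ} (hp : p ≠ 0) (hV : Function.Periodic V p) {d : ℝ}
    (hd : |d| ≤ 2) (hΔ : floquetDiscriminant p V z = d) : z ∈ spectrum ℂ H := by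
  obtain ⟨u, hu, hu₀, hper⟩ := exists_isHalfLineSolution_norm_periodic hV hd hΔ
  refine hu.mem_spectrum hH (bddAbove_range_of_periodic hper hp) fun hsum => hu₀ ?_
  have hper_sq : Function.Periodic (fun n => ‖u n‖ ^ 2) p := hper.comp (· ^ 2)
  ext n
  simpa using eq_const_of_periodic_of_tendsto hper_sq hp hsum.tendsto_atTop_zero n

theorem IsSchrodingerOperator.four_lt_eval_discriminantPolynomial_sq
    (hH : IsSchrodingerOperator V H) {p : ℕ} (hp : p ≠ 0) (hV : Function.Periodic V p) {x : ℝ}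
    (hx : (x : ℂ) ∉ spectrum ℂ H) : 4 < (discriminantPolynomial p V).eval x ^ 2 := by
  contrapose! hx
  refine hH.mem_spectrum_of_abs_discriminant_le_two hp hV ?_ (floquetDiscriminant_ofReal p V x)
  exact abs_le_of_sq_le_sq (by linarith) zero_le_two

end Spectrum

/-! ### Critical points of real-rooted polynomials -/

section Laguerre

open Polynomial

/-- The Laguerre expression `P'² - P P''`, the numerator of `-(P'/P)'`. It is non-negative for
real-rooted `P`. -/
noncomputable def laguerre {R : Type*} [CommRing R] (P : R[X]) : R[X] :=
  derivative P ^ 2 - P * derivative (derivative P)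

lemma laguerre_mul {R : Type*} [CommRing R] (P Q : R[X]) :
    laguerre (P * Q) = laguerre P * Q ^ 2 + P ^ 2 * laguerre Q := by
  simp only [laguerre, derivative_mul, derivative_add]
  ring

lemma eval_laguerre_nonneg {R : Type*} [CommRing R] [LinearOrder R] [IsStrictOrderedRing R]
    {P : R[X]} (hP : P.Splits) (x : R) : 0 ≤ (laguerre P).eval x := by
  induction hP using Submonoid.closure_induction with
  | mem P hP => rcases hP with ⟨a, rfl⟩ | ⟨a, rfl⟩ <;> simp [laguerre]
  | one => simp [laguerre]
  | mul P Q _ _ hP hQ =>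
    rw [laguerre_mul]
    simp only [eval_add, eval_mul, eval_pow]
    positivity

lemma eval_laguerre_pos {K : Type*} [Field K] [LinearOrder K] [IsStrictOrderedRing K]
    {P : K[X]} (hP : P.Splits) (hdeg : P.degree ≠ 0) {x : K} (hx : P.eval x ≠ 0) :
    0 < (laguerre P).eval x := by
  obtain ⟨r, hr⟩ := hP.exists_eval_eq_zero hdeg
  obtain ⟨Q, rfl⟩ := dvd_iff_isRoot.2 hr
  have hne : (X - C r) * Q ≠ 0 := by
    rintro h
    simp [h] at hx
  have hQ : 0 ≤ (laguerre Q).eval x :=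
    eval_laguerre_nonneg (hP.of_dvd hne (dvd_mul_left _ _)) x
  have hlin : laguerre (X - C r) = 1 := by simp [laguerre]
  have hQx : Q.eval x ≠ 0 := fun h => hx (by simp [h])
  rw [laguerre_mul, hlin]
  simp only [eval_add, eval_mul, eval_pow, eval_one]
  positivity

/-- At a critical point `a` with `D a ≠ 0` the Laguerre inequality says `(D²)'' = 2 D D'' < 0`, so
`D²` has a local maximum there. -/
lemma isLocalMax_eval_sq {D : ℝ[X]} (hD : D.Splits) (hdeg : D.degree ≠ 0) {a : ℝ}
    (ha : D.eval a ≠ 0) (hcrit : (derivative D).eval a = 0) :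
    IsLocalMax (fun x => D.eval x ^ 2) a := by
  have hlag := eval_laguerre_pos hD hdeg ha
  simp only [laguerre, eval_sub, eval_pow, eval_mul, hcrit] at hlag
  have hsq : (fun x => D.eval x ^ 2) = fun x => (D ^ 2).eval x := by simp
  have hderiv : deriv (fun x => (D ^ 2).eval x) = fun x => (derivative (D ^ 2)).eval x :=
    funext fun x => Polynomial.deriv _
  rw [hsq]
  refine isLocalMax_of_deriv_deriv_neg ?_ ?_ (D ^ 2).continuous.continuousAt <;>
    rw [hderiv]
  · rw [Polynomial.deriv]
    have hderiv₂ : (derivative (derivative (D ^ 2))).eval a =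
        2 * (D.eval a * (derivative (derivative D)).eval a) := by
      simp only [pow_two, derivative_mul, derivative_add, eval_add, eval_mul, hcrit]
      ring
    rw [hderiv₂]
    linarith
  · simp [pow_two, hcrit]

lemma eval_derivative_ne_zero_of_frequently_lt_sq {D : ℝ[X]} (hD : D.Splits) {a : ℝ}
    (ha : D.eval a ≠ 0) (hlt : ∃ᶠ x in 𝓝 a, D.eval a ^ 2 < D.eval x ^ 2) :
    (derivative D).eval a ≠ 0 := fun hcrit => by
  have hdeg : D.degree ≠ 0 := fun hdeg => by
    obtain ⟨x, hx⟩ := hlt.exists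
    rw [eq_C_of_degree_eq_zero hdeg] at hx
    simp at hx
  exact hlt ((isLocalMax_eval_sq hD hdeg ha hcrit).mono fun x hx => hx.not_gt)

lemma splits_of_forall_aeval_eq_zero_im_eq_zero {D : ℝ[X]}
    (hD : ∀ z : ℂ, aeval z D = 0 → z.im = 0) : D.Splits := by
  refine Splits.of_splits_map (algebraMap ℝ ℂ) (IsAlgClosed.splits _) fun z hz => ?_
  rw [mem_roots', IsRoot.def, eval_map_algebraMap] at hz
  exact ⟨z.re, Complex.ext rfl (hD z hz.2).symm⟩

end Laguerre

/-! ### One-sided derivatives -/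

section OneSided

lemma deriv_nonpos_of_eventually_le_nhdsGT {f : ℝ → ℝ} {f' a : ℝ} (hf : HasDerivAt f f' a)
    (hle : ∀ᶠ x in 𝓝[>] a, f x ≤ f a) : f' ≤ 0 := by
  have hmax : IsLocalMaxOn f (Set.Ioi a) a := hle
  have hcone : (1 : ℝ) ∈ posTangentConeAt (Set.Ioi a) a :=
    mem_posTangentConeAt_of_frequently_mem
      (eventually_mem_nhdsWithin.frequently.mono fun t ht => by simpa using ht)
  simpa using hmax.hasFDerivWithinAt_nonpos hf.hasFDerivAt.hasFDerivWithinAt hcone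

lemma deriv_nonneg_of_eventually_le_nhdsLT {f : ℝ → ℝ} {f' a : ℝ} (hf : HasDerivAt f f' a)
    (hle : ∀ᶠ x in 𝓝[<] a, f x ≤ f a) : 0 ≤ f' := by
  have hmax : IsLocalMaxOn f (Set.Iio a) a := hle
  have hcone : (-1 : ℝ) ∈ posTangentConeAt (Set.Iio a) a :=
    mem_posTangentConeAt_of_frequently_mem
      (eventually_mem_nhdsWithin.frequently.mono fun t ht => by simpa using ht)
  simpa using hmax.hasFDerivWithinAt_nonpos hf.hasFDerivAt.hasFDerivWithinAt hcone

/-- Differentiate `Im f` at its minimum `x` over the closed half plane in the direction `i`. -/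
lemma re_deriv_nonneg_of_im_pos {f : ℂ → ℂ} {f' : ℂ} {x : ℝ} (hf : HasDerivAt f f' x)
    (hpos : ∀ z : ℂ, 0 < z.im → 0 < (f z).im) (hx : (f x).im = 0) : 0 ≤ f'.re := by
  have hmin : IsLocalMinOn (fun z => (f z).im) {z | 0 < z.im} (x : ℂ) := by
    filter_upwards [self_mem_nhdsWithin] with z hz
    exact hx.trans_le (hpos z hz).le
  have hcone : Complex.I ∈ posTangentConeAt {z : ℂ | 0 < z.im} (x : ℂ) :=
    mem_posTangentConeAt_of_frequently_mem
      (eventually_mem_nhdsWithin.frequently.mono fun t ht => by simpa using ht)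
  have him := Complex.imCLM.hasFDerivAt.comp (x : ℂ) (hf.hasFDerivAt.restrictScalars ℝ)
  simpa using hmin.hasFDerivWithinAt_nonneg him.hasFDerivWithinAt hcone

lemma im_deriv_eq_zero_of_eventually_im_eq_zero {f : ℂ → ℂ} {f' : ℂ} {x : ℝ}
    (hf : HasDerivAt f f' x) (him : ∀ᶠ y : ℝ in 𝓝 x, (f y).im = 0) : f'.im = 0 := by
  have himf : HasDerivAt (fun y : ℝ => (f y).im) f'.im x :=
    Complex.imCLM.hasFDerivAt.comp_hasDerivAt x hf.comp_ofReal
  exact himf.unique ((hasDerivAt_const x (0 : ℝ)).congr_of_eventuallyEq him)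

end OneSided

/-! ### The relation `f = 2 cos (c θ)` -/

section TwoMulCos

open Filter

variable {f f₁ θ θ₁ : ℝ → ℝ} {c f₂ θ₂ x : ℝ}

lemma hasDerivAt_two_mul_cos {θ' : ℝ} (hθ : HasDerivAt θ θ' x) :
    HasDerivAt (fun y => 2 * Real.cos (c * θ y)) (-2 * c * Real.sin (c * θ x) * θ') x :=
  ((hθ.const_mul c).cos.const_mul 2).congr_deriv (by ring)

/-- First differentiation: `f' = -2 c sin (c θ) θ'` and `4 - f² = 4 sin² (c θ)`. -/
lemma sq_mul_four_sub_sq_mul_deriv_sq {f' θ' : ℝ} (hf : HasDerivAt f f' x)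
    (hθ : HasDerivAt θ θ' x) (hfθ : f =ᶠ[𝓝 x] fun y => 2 * Real.cos (c * θ y)) :
    c ^ 2 * (4 - f x ^ 2) * θ' ^ 2 = f' ^ 2 := by
  rw [hf.unique ((hasDerivAt_two_mul_cos hθ).congr_of_eventuallyEq hfθ), hfθ.eq_of_nhds]
  linear_combination (-4 * c ^ 2 * θ' ^ 2) * Real.sin_sq_add_cos_sq (c * θ x)

/-- Second differentiation: `f'' = -2 c sin (c θ) θ'' - 2 c² θ'² cos (c θ)`. -/
lemma deriv_mul_deriv_two (hf : ∀ᶠ y in 𝓝 x, HasDerivAt f (f₁ y) y) (hf₁ : HasDerivAt f₁ f₂ x)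
    (hθ : ∀ᶠ y in 𝓝 x, HasDerivAt θ (θ₁ y) y) (hθ₁ : HasDerivAt θ₁ θ₂ x)
    (hfθ : f =ᶠ[𝓝 x] fun y => 2 * Real.cos (c * θ y)) :
    f₁ x * θ₂ = θ₁ x * (f₂ + c ^ 2 * f x * θ₁ x ^ 2) := by
  have hf₁_eq : f₁ =ᶠ[𝓝 x] fun y => -2 * c * Real.sin (c * θ y) * θ₁ y := by
    filter_upwards [hf, hθ, hfθ.eventuallyEq_nhds] with y hfy hθy hfθy
    exact hfy.unique ((hasDerivAt_two_mul_cos hθy).congr_of_eventuallyEq hfθy)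
  have hderiv : HasDerivAt (fun y => -2 * c * Real.sin (c * θ y) * θ₁ y)
      (-2 * c ^ 2 * Real.cos (c * θ x) * θ₁ x ^ 2 - 2 * c * Real.sin (c * θ x) * θ₂) x :=
    (((hθ.self_of_nhds.const_mul c).sin.const_mul (-2 * c)).mul hθ₁).congr_deriv (by ring)
  rw [hf₁.unique (hderiv.congr_of_eventuallyEq hf₁_eq), hf₁_eq.eq_of_nhds, hfθ.eq_of_nhds]
  ring

end TwoMulCos

section Asymptotics

open Filter

variable {α : Type*} {l : Filter α}

lemma tendsto_atTop_of_mul_sq_eq_sq {g t f : α → ℝ} {b : ℝ} (hg : Tendsto g l (𝓝 0))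
    (hf : Tendsto f l (𝓝 b)) (hb : b ≠ 0) (ht : ∀ᶠ x in l, 0 ≤ t x)
    (hgtf : ∀ᶠ x in l, g x * t x ^ 2 = f x ^ 2) : Tendsto t l atTop := by
  have hg_pos : ∀ᶠ x in l, 0 < g x := by
    filter_upwards [hf.eventually_ne hb, hgtf] with x hfx hx
    exact pos_of_mul_pos_left (hx ▸ sq_pos_of_ne_zero hfx) (sq_nonneg (t x))
  have hquot : Tendsto (fun x => f x ^ 2 * (g x)⁻¹) l atTop :=
    (hf.pow 2).pos_mul_atTop (by positivity)
      (tendsto_nhdsWithin_iff.2 ⟨hg, hg_pos⟩).inv_tendsto_nhdsGT_zero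
  refine (Real.tendsto_sqrt_atTop.comp hquot).congr' ?_
  filter_upwards [ht, hgtf, hg_pos] with x htx hx hgx
  rw [Function.comp_apply, ← hx, mul_comm, inv_mul_cancel_left₀ hgx.ne', Real.sqrt_sq htx]

variable {f f₁ f₂ t t₂ : α → ℝ} {c d d₁ d₂ : ℝ}

lemma tendsto_atTop_of_deriv_mul_deriv_two (hc : c ≠ 0) (hf : Tendsto f l (𝓝 d))
    (hf₁ : Tendsto f₁ l (𝓝 d₁)) (hf₂ : Tendsto f₂ l (𝓝 d₂)) (hd : 0 < d * d₁)
    (ht : Tendsto t l atTop)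
    (heq : ∀ᶠ x in l, f₁ x * t₂ x = t x * (f₂ x + c ^ 2 * f x * t x ^ 2)) :
    Tendsto t₂ l atTop := by
  have hd₁ : d₁ ≠ 0 := right_ne_zero_of_mul hd.ne'
  have hcoeff : 0 < c ^ 2 * (d / d₁) :=
    mul_pos (by positivity) (div_pos_iff.2 (mul_pos_iff.1 hd))
  have hbracket : Tendsto (fun x => f₂ x / f₁ x + c ^ 2 * (f x / f₁ x) * t x ^ 2) l atTop :=
    (hf₂.div hf₁ hd₁).add_atTop <|
      ((hf.div hf₁ hd₁).const_mul (c ^ 2)).pos_mul_atTop hcoeff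
        ((tendsto_pow_atTop two_ne_zero).comp ht)
  refine (ht.atTop_mul_atTop₀ hbracket).congr' ?_
  filter_upwards [heq, hf₁.eventually_ne hd₁] with x hx hne
  field_simp
  linear_combination -hx

lemma tendsto_atBot_of_deriv_mul_deriv_two (hc : c ≠ 0) (hf : Tendsto f l (𝓝 d))
    (hf₁ : Tendsto f₁ l (𝓝 d₁)) (hf₂ : Tendsto f₂ l (𝓝 d₂)) (hd : d * d₁ < 0)
    (ht : Tendsto t l atTop)
    (heq : ∀ᶠ x in l, f₁ x * t₂ x = t x * (f₂ x + c ^ 2 * f x * t x ^ 2)) :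
    Tendsto t₂ l atBot := by
  rw [← tendsto_neg_atTop_iff]
  refine tendsto_atTop_of_deriv_mul_deriv_two hc hf hf₁.neg hf₂ (by linarith) ht ?_
  filter_upwards [heq] with x hx
  linear_combination hx

end Asymptotics

/-! ### Extensions of the Marchenko–Ostrovski mapping -/

section MarchenkoOstrovski

open Filter Polynomial

lemma eq_of_frequently_le_of_frequently_lt {X : Type*} [TopologicalSpace X] {f : X → ℝ} {a : X}
    {c : ℝ} (hf : ContinuousAt f a) (hle : ∃ᶠ x in 𝓝 a, f x ≤ c) (hlt : ∃ᶠ x in 𝓝 a, c < f x) :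
    f a = c :=
  le_antisymm (le_of_tendsto_of_frequently hf hle)
    (ge_of_tendsto_of_frequently hf (hlt.mono fun _ hx => hx.le))

lemma hasDerivAt_eval_sq (D : ℝ[X]) (x : ℝ) :
    HasDerivAt (fun y => D.eval y ^ 2) (2 * (D.eval x * (derivative D).eval x)) x :=
  ((D.hasDerivAt x).pow 2).congr_deriv (by ring)

lemma im_eq_zero_of_cos_eq_zero {w : ℂ} (hw : Complex.cos w = 0) : w.im = 0 := by
  obtain ⟨k, rfl⟩ := Complex.cos_eq_zero_iff.1 hw
  have hreal : ((2 * k + 1) * Real.pi / 2 : ℂ) = ((2 * k + 1) * Real.pi / 2 : ℝ) := by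
    push_cast
    rfl
  rw [hreal, Complex.ofReal_im]

/-- `Θ` is a solution of `2 cos (p Θ) = D` in the upper half plane that preserves the upper half
plane and extends analytically, with real values, through the open set `s` of the real line. For
the discriminant `D` of a `p`-periodic potential these are the extensions of the
Marchenko–Ostrovski mapping through `s`, up to the choice of the branch of `arccos`. -/
structure IsMarchenkoOstrovskiExtension (p : ℕ) (D : ℝ[X]) (Θ : ℂ → ℂ) (s : Set ℝ) : Prop where
  isOpen : IsOpen s
  analyticAt : ∀ x ∈ s, AnalyticAt ℂ Θ (x : ℂ)
  im_pos : ∀ z : ℂ, 0 < z.im → 0 < (Θ z).im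
  two_mul_cos : ∀ z : ℂ, 0 < z.im → 2 * Complex.cos (p * Θ z) = aeval z D
  im_eq_zero : ∀ x ∈ s, (Θ (x : ℂ)).im = 0

namespace IsMarchenkoOstrovskiExtension

variable {p : ℕ} {D : ℝ[X]} {Θ : ℂ → ℂ} {s : Set ℝ} {a x : ℝ}

lemma splits (hΘ : IsMarchenkoOstrovskiExtension p D Θ s) (hp : p ≠ 0) : D.Splits := by
  have him_nonpos {z : ℂ} (hz : aeval z D = 0) : z.im ≤ 0 := by
    by_contra! hpos
    have hcos : Complex.cos (p * Θ z) = 0 := by simpa [hz] using hΘ.two_mul_cos z hpos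
    have him : (p : ℝ) * (Θ z).im = 0 := by simpa using im_eq_zero_of_cos_eq_zero hcos
    exact mul_ne_zero (Nat.cast_ne_zero.2 hp) (hΘ.im_pos z hpos).ne' him
  refine splits_of_forall_aeval_eq_zero_im_eq_zero fun z hz => (him_nonpos hz).antisymm ?_
  have hconj : aeval (starRingEnd ℂ z) D = 0 := by rw [aeval_conj, hz, map_zero]
  simpa using him_nonpos hconj

lemma eventually_mem (hΘ : IsMarchenkoOstrovskiExtension p D Θ s) (hx : x ∈ s) :
    ∀ᶠ y in 𝓝 x, y ∈ s :=
  hΘ.isOpen.mem_nhds hx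

lemma hasDerivAt (hΘ : IsMarchenkoOstrovskiExtension p D Θ s) (hx : x ∈ s) :
    HasDerivAt Θ (deriv Θ x) x :=
  (hΘ.analyticAt x hx).differentiableAt.hasDerivAt

lemma hasDerivAt_deriv (hΘ : IsMarchenkoOstrovskiExtension p D Θ s) (hx : x ∈ s) :
    HasDerivAt (deriv Θ) (iteratedDeriv 2 Θ x) x := by
  rw [iteratedDeriv_succ, iteratedDeriv_one]
  exact (hΘ.analyticAt x hx).deriv.differentiableAt.hasDerivAt

lemma im_deriv_eq_zero (hΘ : IsMarchenkoOstrovskiExtension p D Θ s) (hx : x ∈ s) :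
    (deriv Θ x).im = 0 :=
  im_deriv_eq_zero_of_eventually_im_eq_zero (hΘ.hasDerivAt hx)
    ((hΘ.eventually_mem hx).mono hΘ.im_eq_zero)

lemma im_iteratedDeriv_two_eq_zero (hΘ : IsMarchenkoOstrovskiExtension p D Θ s) (hx : x ∈ s) :
    (iteratedDeriv 2 Θ x).im = 0 :=
  im_deriv_eq_zero_of_eventually_im_eq_zero (hΘ.hasDerivAt_deriv hx)
    ((hΘ.eventually_mem hx).mono fun _ => hΘ.im_deriv_eq_zero)

lemma re_deriv_nonneg (hΘ : IsMarchenkoOstrovskiExtension p D Θ s) (hx : x ∈ s) :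
    0 ≤ (deriv Θ x).re :=
  re_deriv_nonneg_of_im_pos (hΘ.hasDerivAt hx) hΘ.im_pos (hΘ.im_eq_zero x hx)

lemma eval_eq_two_mul_cos (hΘ : IsMarchenkoOstrovskiExtension p D Θ s) (hx : x ∈ s) :
    D.eval x = 2 * Real.cos (p * (Θ x).re) := by
  have hne : (𝓝[{z : ℂ | 0 < z.im}] (x : ℂ)).NeBot := by
    rw [← mem_closure_iff_nhdsWithin_neBot, Complex.closure_setOfPred_lt_im]
    simp
  have hΘx : Tendsto Θ (𝓝[{z : ℂ | 0 < z.im}] (x : ℂ)) (𝓝 (Θ x)) :=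
    (hΘ.hasDerivAt hx).continuousAt.tendsto.mono_left nhdsWithin_le_nhds
  have hcos : Tendsto (fun z => 2 * Complex.cos (p * Θ z)) (𝓝[{z : ℂ | 0 < z.im}] (x : ℂ))
      (𝓝 (2 * Complex.cos (p * Θ x))) :=
    ((Complex.continuous_cos.tendsto _).comp (hΘx.const_mul _)).const_mul 2
  have hD : Tendsto (fun z => aeval z D) (𝓝[{z : ℂ | 0 < z.im}] (x : ℂ)) (𝓝 (aeval (x : ℂ) D)) :=
    (D.continuous_aeval.tendsto _).mono_left nhdsWithin_le_nhds
  have hboundary : aeval (x : ℂ) D = 2 * Complex.cos (p * Θ x) :=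
    tendsto_nhds_unique_of_eventuallyEq hD hcos <|
      eventually_mem_nhdsWithin.mono fun z hz => (hΘ.two_mul_cos z hz).symm
  have hΘ_re : Θ x = ((Θ x).re : ℂ) := Complex.ext rfl (hΘ.im_eq_zero x hx)
  have haeval : aeval (x : ℂ) D = (D.eval x : ℝ) := aeval_algebraMap_apply_eq_algebraMap_eval x D
  rw [hΘ_re, haeval] at hboundary
  exact_mod_cast hboundary

lemma eval_sq_le_four (hΘ : IsMarchenkoOstrovskiExtension p D Θ s) (hx : x ∈ s) :
    D.eval x ^ 2 ≤ 4 := by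
  rw [hΘ.eval_eq_two_mul_cos hx, mul_pow]
  linarith [Real.cos_sq_le_one (p * (Θ x).re)]

lemma eventuallyEq_two_mul_cos (hΘ : IsMarchenkoOstrovskiExtension p D Θ s) (hx : x ∈ s) :
    (fun y => D.eval y) =ᶠ[𝓝 x] fun y => 2 * Real.cos (p * (Θ y).re) :=
  (hΘ.eventually_mem hx).mono fun _ => hΘ.eval_eq_two_mul_cos

lemma sq_mul_four_sub_sq_mul_re_deriv_sq (hΘ : IsMarchenkoOstrovskiExtension p D Θ s)
    (hx : x ∈ s) :
    (p : ℝ) ^ 2 * (4 - D.eval x ^ 2) * (deriv Θ x).re ^ 2 = (derivative D).eval x ^ 2 :=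
  sq_mul_four_sub_sq_mul_deriv_sq (D.hasDerivAt x) (hΘ.hasDerivAt hx).real_of_complex
    (hΘ.eventuallyEq_two_mul_cos hx)

lemma eval_derivative_mul_re_iteratedDeriv_two (hΘ : IsMarchenkoOstrovskiExtension p D Θ s)
    (hx : x ∈ s) :
    (derivative D).eval x * (iteratedDeriv 2 Θ x).re =
      (deriv Θ x).re * ((derivative (derivative D)).eval x
        + (p : ℝ) ^ 2 * D.eval x * (deriv Θ x).re ^ 2) :=
  deriv_mul_deriv_two (f := fun y => D.eval y) (.of_forall D.hasDerivAt)
    ((derivative D).hasDerivAt x)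
    ((hΘ.eventually_mem hx).mono fun _ hy => (hΘ.hasDerivAt hy).real_of_complex)
    (hΘ.hasDerivAt_deriv hx).real_of_complex (hΘ.eventuallyEq_two_mul_cos hx)

lemma eval_sq_eq_four (hΘ : IsMarchenkoOstrovskiExtension p D Θ s) (hs : ∃ᶠ x in 𝓝 a, x ∈ s)
    (hgap : ∃ᶠ x in 𝓝 a, 4 < D.eval x ^ 2) : D.eval a ^ 2 = 4 :=
  eq_of_frequently_le_of_frequently_lt (f := fun x => D.eval x ^ 2)
    (D.continuous.pow 2).continuousAt
    (hs.mono fun _ => hΘ.eval_sq_le_four) hgap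

lemma eval_mul_eval_derivative_ne_zero (hΘ : IsMarchenkoOstrovskiExtension p D Θ s) (hp : p ≠ 0)
    (hs : ∃ᶠ x in 𝓝 a, x ∈ s) (hgap : ∃ᶠ x in 𝓝 a, 4 < D.eval x ^ 2) :
    D.eval a * (derivative D).eval a ≠ 0 := by
  have hsq := hΘ.eval_sq_eq_four hs hgap
  have ha : D.eval a ≠ 0 := fun h => by simp [h] at hsq
  refine mul_ne_zero ha (eval_derivative_ne_zero_of_frequently_lt_sq (hΘ.splits hp) ha ?_)
  simpa only [hsq] using hgap

lemma tendsto_re_deriv_atTop (hΘ : IsMarchenkoOstrovskiExtension p D Θ s) {l : Filter ℝ}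
    (hl : l ≤ 𝓝 a) (hs : ∀ᶠ x in l, x ∈ s) (hsq : D.eval a ^ 2 = 4)
    (hderiv : (derivative D).eval a ≠ 0) :
    Tendsto (fun x : ℝ => (deriv Θ x).re) l atTop := by
  have hzero : Tendsto (fun x => (p : ℝ) ^ 2 * (4 - D.eval x ^ 2)) l (𝓝 0) := by
    have hcont : Continuous fun x => (p : ℝ) ^ 2 * (4 - D.eval x ^ 2) := by fun_prop
    simpa [hsq] using (hcont.tendsto a).mono_left hl
  exact tendsto_atTop_of_mul_sq_eq_sq hzero (((derivative D).continuous.tendsto a).mono_left hl)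
    hderiv (hs.mono fun _ => hΘ.re_deriv_nonneg)
    (hs.mono fun _ => hΘ.sq_mul_four_sub_sq_mul_re_deriv_sq)

theorem tendsto_iteratedDeriv_two_nhdsGT (hΘ : IsMarchenkoOstrovskiExtension p D Θ s) (hp : p ≠ 0)
    (hs : ∀ᶠ x in 𝓝[>] a, x ∈ s) (hgap : ∃ᶠ x in 𝓝 a, 4 < D.eval x ^ 2) :
    Tendsto (fun x : ℝ => (iteratedDeriv 2 Θ x).re) (𝓝[>] a) atBot := by
  have hfreq : ∃ᶠ x in 𝓝 a, x ∈ s := hs.frequently.filter_mono nhdsWithin_le_nhds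
  have hsq := hΘ.eval_sq_eq_four hfreq hgap
  have hne := hΘ.eval_mul_eval_derivative_ne_zero hp hfreq hgap
  have hnonpos : 2 * (D.eval a * (derivative D).eval a) ≤ 0 :=
    deriv_nonpos_of_eventually_le_nhdsGT (hasDerivAt_eval_sq D a)
      (hs.mono fun x hx => hsq ▸ hΘ.eval_sq_le_four hx)
  have hD (P : ℝ[X]) : Tendsto (fun x => P.eval x) (𝓝[>] a) (𝓝 (P.eval a)) :=
    (P.continuous.tendsto a).mono_left nhdsWithin_le_nhds
  exact tendsto_atBot_of_deriv_mul_deriv_two (Nat.cast_ne_zero.2 hp) (hD D) (hD _) (hD _)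
    (hne.lt_of_le (by linarith))
    (hΘ.tendsto_re_deriv_atTop nhdsWithin_le_nhds hs hsq (right_ne_zero_of_mul hne))
    (hs.mono fun _ => hΘ.eval_derivative_mul_re_iteratedDeriv_two)

theorem tendsto_iteratedDeriv_two_nhdsLT (hΘ : IsMarchenkoOstrovskiExtension p D Θ s) (hp : p ≠ 0)
    (hs : ∀ᶠ x in 𝓝[<] a, x ∈ s) (hgap : ∃ᶠ x in 𝓝 a, 4 < D.eval x ^ 2) :
    Tendsto (fun x : ℝ => (iteratedDeriv 2 Θ x).re) (𝓝[<] a) atTop := by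
  have hfreq : ∃ᶠ x in 𝓝 a, x ∈ s := hs.frequently.filter_mono nhdsWithin_le_nhds
  have hsq := hΘ.eval_sq_eq_four hfreq hgap
  have hne := hΘ.eval_mul_eval_derivative_ne_zero hp hfreq hgap
  have hnonneg : 0 ≤ 2 * (D.eval a * (derivative D).eval a) :=
    deriv_nonneg_of_eventually_le_nhdsLT (hasDerivAt_eval_sq D a)
      (hs.mono fun x hx => hsq ▸ hΘ.eval_sq_le_four hx)
  have hD (P : ℝ[X]) : Tendsto (fun x => P.eval x) (𝓝[<] a) (𝓝 (P.eval a)) :=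
    (P.continuous.tendsto a).mono_left nhdsWithin_le_nhds
  exact tendsto_atTop_of_deriv_mul_deriv_two (Nat.cast_ne_zero.2 hp) (hD D) (hD _) (hD _)
    (hne.symm.lt_of_le (by linarith))
    (hΘ.tendsto_re_deriv_atTop nhdsWithin_le_nhds hs hsq (right_ne_zero_of_mul hne))
    (hs.mono fun _ => hΘ.eval_derivative_mul_re_iteratedDeriv_two)

end IsMarchenkoOstrovskiExtension

end MarchenkoOstrovski

/-- **Band-edge behavior of `Θ''`** (part of Lemma 2.1).
If `[λm, λn]` is a connected component of `Σ = σ(H_V)` and `Θ̃` is an analytic extension of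
the Marchenko–Ostrovski mapping through `(λm, λn)`, real on `(λm, λn)`, then `Θ̃'' → -∞`
at the left edge and `Θ̃'' → +∞` at the right edge. -/
theorem MO_second_derivative_band_edges
    (p : ℕ) (hp : 1 ≤ p) (V : ℤ → ℝ) (hV : ∀ n : ℤ, V (n + p) = V n)
    (H : lp (fun _ : ℤ => ℂ) 2 →L[ℂ] lp (fun _ : ℤ => ℂ) 2)
    (hH : ∀ ψ : lp (fun _ : ℤ => ℂ) 2, ∀ n : ℤ,
      (H ψ : ℤ → ℂ) n = ψ (n - 1) + ψ (n + 1) + (V n : ℂ) * ψ n)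
    (lm ln : ℝ) (hlt : lm < ln)
    (hsub : ∀ y : ℝ, y ∈ Set.Icc lm ln → (y : ℂ) ∈ spectrum ℂ H)
    (hgap : ∃ ε > 0, ∀ y : ℝ,
      y ∈ Set.Ioo (lm - ε) lm ∪ Set.Ioo ln (ln + ε) → (y : ℂ) ∉ spectrum ℂ H)
    (U : Set ℂ) (hU : IsOpen U) (hUsub : ∀ y : ℝ, y ∈ Set.Ioo lm ln → (y : ℂ) ∈ U)
    (Θ : ℂ → ℂ)
    (hana : AnalyticOnNhd ℂ Θ ({z : ℂ | 0 < z.im} ∪ U))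
    (hmaps : ∀ z : ℂ, 0 < z.im → 0 < (Θ z).im)
    (hre : ∀ z : ℂ, 0 < z.im → (Θ z).re ∈ Set.Icc (-Real.pi) 0)
    (hdisc : ∀ z : ℂ, 0 < z.im →
      2 * Complex.cos ((p : ℂ) * Θ z) = floquetDiscriminant p V z)
    (hreal : ∀ y : ℝ, y ∈ Set.Ioo lm ln → (Θ (y : ℂ)).im = 0) :
    (∀ y : ℝ, y ∈ Set.Ioo lm ln → (iteratedDeriv 2 Θ (y : ℂ)).im = 0)
    ∧ Filter.Tendsto (fun y : ℝ => (iteratedDeriv 2 Θ (y : ℂ)).re) (𝓝[>] lm) Filter.atBot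
    ∧ Filter.Tendsto (fun y : ℝ => (iteratedDeriv 2 Θ (y : ℂ)).re) (𝓝[<] ln) Filter.atTop := by
  obtain ⟨ε, hε, hgap⟩ := hgap
  have hp₀ : p ≠ 0 := Nat.one_le_iff_ne_zero.1 hp
  have hop : IsSchrodingerOperator V H := hH
  have hΘ : IsMarchenkoOstrovskiExtension p (discriminantPolynomial p V) Θ (Set.Ioo lm ln) :=
    { isOpen := isOpen_Ioo
      analyticAt := fun x hx => hana x (Or.inr (hUsub x hx))
      im_pos := hmaps
      two_mul_cos := fun z hz => (hdisc z hz).trans (aeval_discriminantPolynomial p V z).symm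
      im_eq_zero := hreal }
  have hleft : ∃ᶠ x in 𝓝[<] lm, 4 < (discriminantPolynomial p V).eval x ^ 2 :=
    (Filter.eventually_of_mem (Ioo_mem_nhdsLT (sub_lt_self lm hε)) fun x hx =>
      hop.four_lt_eval_discriminantPolynomial_sq hp₀ hV (hgap x (Or.inl hx))).frequently
  have hright : ∃ᶠ x in 𝓝[>] ln, 4 < (discriminantPolynomial p V).eval x ^ 2 :=
    (Filter.eventually_of_mem (Ioo_mem_nhdsGT (lt_add_of_pos_right ln hε)) fun x hx =>
      hop.four_lt_eval_discriminantPolynomial_sq hp₀ hV (hgap x (Or.inr hx))).frequently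
  exact ⟨fun y hy => hΘ.im_iteratedDeriv_two_eq_zero hy,
    hΘ.tendsto_iteratedDeriv_two_nhdsGT hp₀ (Ioo_mem_nhdsGT hlt)
      (hleft.filter_mono nhdsWithin_le_nhds),
    hΘ.tendsto_iteratedDeriv_two_nhdsLT hp₀ (Ioo_mem_nhdsLT hlt)
      (hright.filter_mono nhdsWithin_le_nhds)⟩
end
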